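/- arXiv:2505.05436 — 4 statements merged into one kernel-verified Lean document; each statement's English description precedes it below -/
import Mathlib

section
/- Let f : (0,∞) × (0,∞) → [−∞,+∞] be an arbitrary function with values in the extended real line. Then there exists a map ε ↦ δ(ε) from (0,∞) to (0,∞) such that δ(ε) → 0 as ε → 0⁺ and limsup_{ε→0⁺} f(ε, δ(ε)) ≤ limsup_{δ→0⁺} limsup_{ε→0⁺} f(ε, δ). -/
open Filter

/-!
For each `n`, some `dₙ` within the `n`-th neighbourhood in a basis for `δ → 0⁺` makes
`f(ε, dₙ)` lie in the `n`-th neighbourhood of the target as soon as `ε` is small enough. Letting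
the index `n = N(ε)` tend to infinity slowly enough that `ε` is always small enough for `N(ε)`,
one takes `δ(ε) = d_{N(ε)}`. Upper limits fit this scheme because `limsup u ≤ x` means exactly
that `max u x → x`, a genuine convergence.
-/

open scoped Topology

section Diagonal

variable {α β γ : Type*} {la : Filter α} {lb : Filter β}

theorem exists_tendsto_atTop_eventually {p : ℕ → α → Prop} {M : α → ℕ}
    (hM : Tendsto M la atTop) (hp : ∀ n, ∀ᶠ a in la, p n a) :
    ∃ N : α → ℕ, Tendsto N la atTop ∧ ∀ᶠ a in la, p (N a) a := by
  classical
  refine ⟨fun a => Nat.findGreatest (p · a) (M a), tendsto_atTop.2 fun n => ?_, ?_⟩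
  · filter_upwards [hM.eventually_ge_atTop n, hp n] with a hn hpn
    exact Nat.le_findGreatest hn hpn
  · filter_upwards [hp 0] with a hp0
    exact Nat.findGreatest_spec (P := (p · a)) (Nat.zero_le (M a)) hp0

theorem exists_tendsto_of_tendsto_curry [lb.NeBot] [lb.IsCountablyGenerated]
    {lc : Filter γ} [lc.IsCountablyGenerated] {g : β × α → γ} {M : α → ℕ} {s : Set β}
    (hM : Tendsto M la atTop) (hs : s ∈ lb) (hg : Tendsto g (lb.curry la) lc) :
    ∃ δ : α → β, (∀ a, δ a ∈ s) ∧ Tendsto δ la lb ∧ Tendsto (fun a => g (δ a, a)) la lc := by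
  obtain ⟨U, hU⟩ := lb.exists_antitone_basis
  obtain ⟨V, hV⟩ := lc.exists_antitone_basis
  have exists_good (n : ℕ) : ∃ b ∈ s, b ∈ U n ∧ ∀ᶠ a in la, g (b, a) ∈ V n := by
    have hgV : ∀ᶠ b in lb, ∀ᶠ a in la, g (b, a) ∈ V n :=
      eventually_curry_iff.1 (hg (hV.mem n))
    exact (Eventually.and hs (Eventually.and (hU.mem n) hgV)).exists
  choose d hds hdU hdV using exists_good
  obtain ⟨N, hN, hNV⟩ := exists_tendsto_atTop_eventually hM hdV
  refine ⟨d ∘ N, fun a => hds (N a), (hU.tendsto hdU).comp hN,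
    hV.tendsto_right_iff.2 fun n _ => ?_⟩
  filter_upwards [hN.eventually_ge_atTop n, hNV] with a hn ha
  exact hV.antitone hn ha

variable [CompleteLinearOrder γ]

theorem limsup_curry_le (g : β × α → γ) :
    limsup g (lb.curry la) ≤ limsup (fun b => limsup (fun a => g (b, a)) la) lb := by
  refine (limsup_le_iff).2 fun c hc => eventually_curry_iff.2 ?_
  filter_upwards [eventually_lt_of_limsup_lt hc] with b hb
  exact eventually_lt_of_limsup_lt hb

variable [TopologicalSpace γ] [OrderTopology γ]

theorem limsup_le_iff_tendsto_max {u : α → γ} {x : γ} :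
    limsup u la ≤ x ↔ Tendsto (fun a => max (u a) x) la (𝓝 x) := by
  rw [limsup_le_iff, tendsto_order]
  constructor
  · intro h
    refine ⟨fun y hy => .of_forall fun a => lt_max_of_lt_right hy, fun y hy => ?_⟩
    exact (h y hy).mono fun a ha => max_lt ha hy
  · exact fun h y hy => (h.2 y hy).mono fun a ha => (le_max_left _ _).trans_lt ha

theorem diagonalization_lemma_general [FirstCountableTopology γ] [lb.NeBot]
    [lb.IsCountablyGenerated] {M : α → ℕ} {s : Set β} (hM : Tendsto M la atTop) (hs : s ∈ lb)
    (f : α → β → γ) :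
    ∃ δ : α → β, (∀ a, δ a ∈ s) ∧ Tendsto δ la lb ∧
      limsup (fun a => f a (δ a)) la ≤ limsup (fun b => limsup (fun a => f a b) la) lb := by
  obtain ⟨δ, hδs, hδ, hfδ⟩ := exists_tendsto_of_tendsto_curry hM hs
    (limsup_le_iff_tendsto_max.1 (limsup_curry_le (fun q : β × α => f q.2 q.1)))
  exact ⟨δ, hδs, hδ, limsup_le_iff_tendsto_max.2 hfδ⟩

end Diagonal

/-- **Diagonalization lemma** (Lemma `diagonal-argument` in the paper, cf. Attouch,
Corollary 1.16): for any function `f` of two positive real variables with values in the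
extended real line, there is a map `ε ↦ δ(ε)` from `(0,∞)` to `(0,∞)` with `δ(ε) → 0`
as `ε → 0⁺`, such that
`limsup_{ε→0⁺} f(ε, δ(ε)) ≤ limsup_{δ→0⁺} limsup_{ε→0⁺} f(ε, δ)`. -/
theorem diagonalization_lemma (f : ℝ → ℝ → EReal) :
    ∃ δ : ℝ → ℝ,
      (∀ ε : ℝ, 0 < ε → 0 < δ ε) ∧
      Tendsto δ (nhdsWithin (0 : ℝ) (Set.Ioi 0)) (nhds (0 : ℝ)) ∧
      Filter.limsup (fun ε => f ε (δ ε)) (nhdsWithin (0 : ℝ) (Set.Ioi 0)) ≤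
        Filter.limsup
          (fun d => Filter.limsup (fun ε => f ε d) (nhdsWithin (0 : ℝ) (Set.Ioi 0)))
          (nhdsWithin (0 : ℝ) (Set.Ioi 0)) := by
  obtain ⟨δ, hδ_pos, hδ, hf⟩ := diagonalization_lemma_general (lb := 𝓝[>] 0)
    (tendsto_nat_floor_atTop.comp tendsto_inv_nhdsGT_zero) self_mem_nhdsWithin f
  exact ⟨δ, fun ε _ => hδ_pos ε, hδ.mono_right nhdsWithin_le_nhds, hf⟩
end

section
/- Let A₁,…,A_n ∈ ℝ² (n ≥ 3) be the vertices, listed in cyclic order, of a nondegenerate convex polygon P_n. Then there exists a constant c₁ > 0, depending only on A₁,…,A_n, such that for every choice of values u(A₁),…,u(A_n) ∈ ℝ², the polygon spring energy satisfies E_poly(u,P_n) ≤ c₁ ( ‖∇u‖²_{L²(P_n)} + |P_n| ). -/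
/-- The matrix with columns `v` and `w`. -/
noncomputable def colMat (v w : EuclideanSpace ℝ (Fin 2)) : Matrix (Fin 2) (Fin 2) ℝ :=
  Matrix.of fun i j => ![v i, w i] j

/-- The affine interpolation gradient determined by the points `x₁, x₂, x₃` and the
values `u₁, u₂, u₃`: `(u₁−u₂ | u₂−u₃) · (x₁−x₂ | x₂−x₃)⁻¹`. -/
noncomputable def gradMat (x₁ x₂ x₃ u₁ u₂ u₃ : EuclideanSpace ℝ (Fin 2)) :
    Matrix (Fin 2) (Fin 2) ℝ :=
  colMat (u₁ - u₂) (u₂ - u₃) * (colMat (x₁ - x₂) (x₂ - x₃))⁻¹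

/-- Squared Frobenius norm of a 2×2 matrix. -/
noncomputable def frobSq (M : Matrix (Fin 2) (Fin 2) ℝ) : ℝ :=
  ∑ i, ∑ j, (M i j) ^ 2

/-- Area of the triangle with vertices `A`, `B`, `C`. -/
noncomputable def triArea (A B C : EuclideanSpace ℝ (Fin 2)) : ℝ :=
  (MeasureTheory.volume (convexHull ℝ {A, B, C})).toReal

/-- The polygon spring energy of the vertices `A 1, …, A n` with values `u 1, …, u n`:
`E_poly(u, Pₙ) = Σ_{i=1}^{n−1} (‖u(A_{i+1}) − u(A_i)‖ − ‖A_{i+1} − A_i‖)²`. -/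
noncomputable def polyEnergy (n : ℕ) (A u : ℕ → EuclideanSpace ℝ (Fin 2)) : ℝ :=
  ∑ i ∈ Finset.Icc 1 (n - 1), (‖u (i + 1) - u i‖ - ‖A (i + 1) - A i‖) ^ 2

/-- `‖∇u‖²_{L²(Pₙ)}` for the fan triangulation `T_i = (A 1, A i, A (i+1))`,
`i = 2, …, n−1`: the sum of `‖∇u|_{T_i}‖² · |T_i|`. -/
noncomputable def polyGradSq (n : ℕ) (A u : ℕ → EuclideanSpace ℝ (Fin 2)) : ℝ :=
  ∑ i ∈ Finset.Icc 2 (n - 1),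
    frobSq (gradMat (A 1) (A i) (A (i + 1)) (u 1) (u i) (u (i + 1))) *
      triArea (A 1) (A i) (A (i + 1))

/-- `|Pₙ|`: the total area of the fan triangulation. -/
noncomputable def polyArea (n : ℕ) (A : ℕ → EuclideanSpace ℝ (Fin 2)) : ℝ :=
  ∑ i ∈ Finset.Icc 2 (n - 1), triArea (A 1) (A i) (A (i + 1))

/-!
On a triangle with vertices `x i`, the interpolation gradient `G` maps each edge `x i - x j` to
`u i - u j`, so `‖u i - u j‖² ≤ ‖G‖² ‖x i - x j‖²`. As `(s - t)² ≤ s² + t²` for `s, t ≥ 0`, the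
spring energy of that edge is at most `‖x i - x j‖² (‖G‖² + 1)`, which is a constant multiple of the
triangle's contribution `(‖G‖² + 1) |T|` to `‖∇u‖² + |Pₙ|`. Every polygon edge `A i A (i + 1)` is an
edge of some fan triangle: of `T_i` if `i ≥ 2`, of `T_2` if `i = 1`.
-/

open Matrix MeasureTheory

theorem sq_sub_le_sq_add_sq {R : Type*} [CommRing R] [PartialOrder R] [IsOrderedRing R] {s t : R}
    (hs : 0 ≤ s) (ht : 0 ≤ t) : (s - t) ^ 2 ≤ s ^ 2 + t ^ 2 :=
  calc (s - t) ^ 2 = s ^ 2 + t ^ 2 - 2 * (s * t) := by ring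
    _ ≤ s ^ 2 + t ^ 2 := sub_le_self _ (mul_nonneg zero_le_two (mul_nonneg hs ht))

theorem norm_toEuclideanLin_sq_le {m n : Type*} [Fintype m] [Fintype n] [DecidableEq n]
    (M : Matrix m n ℝ) (v : EuclideanSpace ℝ n) :
    ‖M.toEuclideanLin v‖ ^ 2 ≤ (∑ i, ∑ j, M i j ^ 2) * ‖v‖ ^ 2 := by
  rw [EuclideanSpace.real_norm_sq_eq, EuclideanSpace.real_norm_sq_eq, Finset.sum_mul]
  exact Finset.sum_le_sum fun i _ => Finset.sum_mul_sq_le_sq_mul_sq _ (M i) v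

theorem linearIndependent_sub_sub_of_affineIndependent {k V : Type*} [Ring k]
    [AddCommGroup V] [Module k V] {x : Fin 3 → V} (hx : AffineIndependent k x) :
    LinearIndependent k ![x 0 - x 1, x 1 - x 2] := by
  rw [LinearIndependent.pair_iff]
  intro s t hst
  have hw := affineIndependent_iff.1 hx Finset.univ ![s, t - s, -t] (by simp [Fin.sum_univ_three])
    (by
      simp only [Fin.sum_univ_three, cons_val, sub_smul, neg_smul]
      rw [← hst, smul_sub, smul_sub]
      abel)
  exact ⟨hw 0 (Finset.mem_univ _), neg_eq_zero.1 (hw 2 (Finset.mem_univ _))⟩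

theorem measure_convexHull_range_pos {ι V : Type*} [Fintype ι] [NormedAddCommGroup V]
    [NormedSpace ℝ V] [FiniteDimensional ℝ V] [MeasurableSpace V] (μ : Measure V)
    [μ.IsOpenPosMeasure] {x : ι → V} (hx : AffineIndependent ℝ x)
    (hcard : Fintype.card ι = Module.finrank ℝ V + 1) :
    0 < μ (convexHull ℝ (Set.range x)) :=
  Measure.measure_pos_of_nonempty_interior μ <|
    interior_convexHull_nonempty_iff_affineSpan_eq_top.2 <|
      hx.affineSpan_eq_top_iff_card_eq_finrank_add_one.2 hcard

section Triangle

variable {x : Fin 3 → EuclideanSpace ℝ (Fin 2)}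

theorem triArea_pos (hx : AffineIndependent ℝ x) : 0 < triArea (x 0) (x 1) (x 2) := by
  have hrange : ({x 0, x 1, x 2} : Set (EuclideanSpace ℝ (Fin 2))) = Set.range x := by
    ext; simp [Fin.exists_fin_succ, eq_comm]
  rw [triArea, hrange]
  exact ENNReal.toReal_pos (measure_convexHull_range_pos volume hx (by simp)).ne'
    (isBounded_convexHull.2 (Set.finite_range x).isBounded).measure_lt_top.ne

theorem isUnit_colMat_iff {v w : EuclideanSpace ℝ (Fin 2)} :
    IsUnit (colMat v w) ↔ LinearIndependent ℝ ![v, w] := by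
  have hcol : (colMat v w).col = WithLp.linearEquiv 2 ℝ (Fin 2 → ℝ) ∘ ![v, w] := by
    ext j i
    fin_cases j <;> rfl
  rw [← linearIndependent_cols_iff_isUnit, hcol]
  exact LinearMap.linearIndependent_iff _ (LinearEquiv.ker _)

theorem mul_colMat (M : Matrix (Fin 2) (Fin 2) ℝ) (v w : EuclideanSpace ℝ (Fin 2)) :
    M * colMat v w = colMat (M.toEuclideanLin v) (M.toEuclideanLin w) := by
  ext i j
  fin_cases j <;> simp [colMat, mul_apply, mulVec, dotProduct]

theorem colMat_inj {v w v' w' : EuclideanSpace ℝ (Fin 2)} :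
    colMat v w = colMat v' w' ↔ v = v' ∧ w = w' := by
  rw [← Matrix.ext_iff, forall_comm, Fin.forall_fin_two, PiLp.ext_iff, PiLp.ext_iff]
  rfl

theorem toEuclideanLin_gradMat_sub (hx : AffineIndependent ℝ x)
    (u : Fin 3 → EuclideanSpace ℝ (Fin 2)) (i j : Fin 3) :
    (gradMat (x 0) (x 1) (x 2) (u 0) (u 1) (u 2)).toEuclideanLin (x i - x j) = u i - u j := by
  set G := gradMat (x 0) (x 1) (x 2) (u 0) (u 1) (u 2)
  have hunit : IsUnit (colMat (x 0 - x 1) (x 1 - x 2)) :=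
    isUnit_colMat_iff.2 (linearIndependent_sub_sub_of_affineIndependent hx)
  have hmul : G * colMat (x 0 - x 1) (x 1 - x 2) = colMat (u 0 - u 1) (u 1 - u 2) :=
    nonsing_inv_mul_cancel_right _ _ ((isUnit_iff_isUnit_det _).1 hunit)
  obtain ⟨h₀, h₂⟩ := colMat_inj.1 ((mul_colMat _ _ _).symm.trans hmul)
  have hbase : ∀ i, G.toEuclideanLin (x i - x 1) = u i - u 1 := by
    intro i
    fin_cases i
    · exact h₀
    · simp
    · simpa using congrArg Neg.neg h₂
  rw [← sub_sub_sub_cancel_right (x i) (x j) (x 1), map_sub, hbase, hbase,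
    sub_sub_sub_cancel_right]

theorem norm_sub_sq_le_frobSq_gradMat_mul (hx : AffineIndependent ℝ x)
    (u : Fin 3 → EuclideanSpace ℝ (Fin 2)) (i j : Fin 3) :
    ‖u i - u j‖ ^ 2 ≤
      frobSq (gradMat (x 0) (x 1) (x 2) (u 0) (u 1) (u 2)) * ‖x i - x j‖ ^ 2 := by
  rw [← toEuclideanLin_gradMat_sub hx u i j]
  exact norm_toEuclideanLin_sq_le _ _

/-- The contribution `(‖∇u|_T‖² + 1) |T|` of the triangle `T` with vertices `x` and values `u` to
`‖∇u‖²_{L²} + |Pₙ|`, expanded so that it sums to `polyGradSq + polyArea` termwise. -/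
noncomputable def triEnergy (x u : Fin 3 → EuclideanSpace ℝ (Fin 2)) : ℝ :=
  frobSq (gradMat (x 0) (x 1) (x 2) (u 0) (u 1) (u 2)) * triArea (x 0) (x 1) (x 2) +
    triArea (x 0) (x 1) (x 2)

theorem triEnergy_nonneg (x u : Fin 3 → EuclideanSpace ℝ (Fin 2)) : 0 ≤ triEnergy x u := by
  unfold triEnergy frobSq triArea
  positivity

theorem sq_norm_sub_sub_norm_sub_le_triEnergy (hx : AffineIndependent ℝ x)
    (u : Fin 3 → EuclideanSpace ℝ (Fin 2)) (i j : Fin 3) :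
    (‖u i - u j‖ - ‖x i - x j‖) ^ 2 ≤
      ‖x i - x j‖ ^ 2 / triArea (x 0) (x 1) (x 2) * triEnergy x u := by
  have harea := triArea_pos hx
  set G := gradMat (x 0) (x 1) (x 2) (u 0) (u 1) (u 2) with hG
  calc (‖u i - u j‖ - ‖x i - x j‖) ^ 2
      ≤ ‖u i - u j‖ ^ 2 + ‖x i - x j‖ ^ 2 := sq_sub_le_sq_add_sq (norm_nonneg _) (norm_nonneg _)
    _ ≤ frobSq G * ‖x i - x j‖ ^ 2 + ‖x i - x j‖ ^ 2 := by
        gcongr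
        exact norm_sub_sq_le_frobSq_gradMat_mul hx u i j
    _ = ‖x i - x j‖ ^ 2 / triArea (x 0) (x 1) (x 2) * triEnergy x u := by
        rw [triEnergy, ← hG]
        field_simp

end Triangle

section Fan

variable {n : ℕ} {A u : ℕ → EuclideanSpace ℝ (Fin 2)}

/-- The indices of the vertices of the fan triangle `T_i = (A 1, A i, A (i+1))`, so that
`A ∘ fanTriangle i` is the triple of its vertices. -/
def fanTriangle (i : ℕ) : Fin 3 → ℕ := ![1, i, i + 1]

theorem comp_fanTriangle {α : Type*} (f : ℕ → α) (i : ℕ) :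
    f ∘ fanTriangle i = ![f 1, f i, f (i + 1)] := by
  ext k
  fin_cases k <;> rfl

theorem exists_fanTriangle_of_edge (hn : 3 ≤ n) {i : ℕ} (hi : i ∈ Finset.Icc 1 (n - 1)) :
    ∃ t ∈ Finset.Icc 2 (n - 1), ∃ k l, fanTriangle t k = i + 1 ∧ fanTriangle t l = i := by
  rw [Finset.mem_Icc] at hi
  obtain rfl | hi₂ : i = 1 ∨ 2 ≤ i := by omega
  · exact ⟨2, Finset.mem_Icc.2 (by omega), 1, 0, rfl, rfl⟩
  · exact ⟨i, Finset.mem_Icc.2 ⟨hi₂, hi.2⟩, 2, 1, rfl, rfl⟩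

theorem triEnergy_le_polyGradSq_add_polyArea {t : ℕ} (ht : t ∈ Finset.Icc 2 (n - 1)) :
    triEnergy (A ∘ fanTriangle t) (u ∘ fanTriangle t) ≤ polyGradSq n A u + polyArea n A :=
  calc triEnergy (A ∘ fanTriangle t) (u ∘ fanTriangle t)
      ≤ ∑ i ∈ Finset.Icc 2 (n - 1), triEnergy (A ∘ fanTriangle i) (u ∘ fanTriangle i) :=
        Finset.single_le_sum (f := fun i => triEnergy (A ∘ fanTriangle i) (u ∘ fanTriangle i))
          (fun _ _ => triEnergy_nonneg _ _) ht
    _ = polyGradSq n A u + polyArea n A := Finset.sum_add_distrib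

theorem exists_pos_edge_energy_le (hn : 3 ≤ n)
    (hfan : ∀ i ∈ Finset.Icc 2 (n - 1), AffineIndependent ℝ (A ∘ fanTriangle i))
    {i : ℕ} (hi : i ∈ Finset.Icc 1 (n - 1)) :
    ∃ c : ℝ, 0 < c ∧ ∀ u : ℕ → EuclideanSpace ℝ (Fin 2),
      (‖u (i + 1) - u i‖ - ‖A (i + 1) - A i‖) ^ 2 ≤ c * (polyGradSq n A u + polyArea n A) := by
  obtain ⟨t, ht, k, l, hk, hl⟩ := exists_fanTriangle_of_edge hn hi
  have hkl : k ≠ l := by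
    rintro rfl
    omega
  set x := A ∘ fanTriangle t
  have hxk : x k = A (i + 1) := congrArg A hk
  have hxl : x l = A i := congrArg A hl
  have hlength : 0 < ‖x k - x l‖ := norm_sub_pos_iff.2 ((hfan t ht).injective.ne hkl)
  have harea : 0 < triArea (x 0) (x 1) (x 2) := triArea_pos (hfan t ht)
  refine ⟨‖x k - x l‖ ^ 2 / triArea (x 0) (x 1) (x 2), by positivity, fun u => ?_⟩
  calc (‖u (i + 1) - u i‖ - ‖A (i + 1) - A i‖) ^ 2
      = (‖(u ∘ fanTriangle t) k - (u ∘ fanTriangle t) l‖ - ‖x k - x l‖) ^ 2 := by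
        rw [hxk, hxl, Function.comp_apply, Function.comp_apply, hk, hl]
    _ ≤ ‖x k - x l‖ ^ 2 / triArea (x 0) (x 1) (x 2) * triEnergy x (u ∘ fanTriangle t) :=
        sq_norm_sub_sub_norm_sub_le_triEnergy (hfan t ht) _ k l
    _ ≤ ‖x k - x l‖ ^ 2 / triArea (x 0) (x 1) (x 2) * (polyGradSq n A u + polyArea n A) := by
        gcongr
        exact triEnergy_le_polyGradSq_add_polyArea ht

end Fan

/-- Upper bound for the spring energy of a nondegenerate convex polygon with vertices
`A 1, …, A n` (`n ≥ 3`) listed in cyclic order (in particular each fan triangle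
`A 1, A i, A (i+1)`, `i = 2, …, n−1`, is nondegenerate): there is `c₁ > 0` depending
only on the vertices such that for all values `u 1, …, u n ∈ ℝ²`,
`E_poly(u, Pₙ) ≤ c₁ (‖∇u‖²_{L²(Pₙ)} + |Pₙ|)`. -/
theorem polygon_energy_upper_bound (n : ℕ) (hn : 3 ≤ n)
    (A : ℕ → EuclideanSpace ℝ (Fin 2))
    (hfan : ∀ i ∈ Finset.Icc 2 (n - 1), AffineIndependent ℝ ![A 1, A i, A (i + 1)]) :
    ∃ c₁ : ℝ, 0 < c₁ ∧
      ∀ u : ℕ → EuclideanSpace ℝ (Fin 2),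
        polyEnergy n A u ≤ c₁ * (polyGradSq n A u + polyArea n A) := by
  have hfan' : ∀ i ∈ Finset.Icc 2 (n - 1), AffineIndependent ℝ (A ∘ fanTriangle i) := by
    simpa only [comp_fanTriangle] using hfan
  choose! c hc hle using fun i => exists_pos_edge_energy_le hn hfan' (i := i)
  refine ⟨∑ i ∈ Finset.Icc 1 (n - 1), c i,
    Finset.sum_pos hc (Finset.nonempty_Icc.2 (by omega)), fun u => ?_⟩
  calc polyEnergy n A u
      ≤ ∑ i ∈ Finset.Icc 1 (n - 1), c i * (polyGradSq n A u + polyArea n A) :=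
        Finset.sum_le_sum fun i hi => hle i hi u
    _ = (∑ i ∈ Finset.Icc 1 (n - 1), c i) * (polyGradSq n A u + polyArea n A) :=
        (Finset.sum_mul _ _ _).symm
end

section
/- Let A₁,…,A_n ∈ ℝ² (n ≥ 3) be the vertices, listed in cyclic order, of a nondegenerate convex polygon P_n. Then there exist constants c₂ > 0 and c₃ > 0, depending only on A₁,…,A_n, such that for every choice of values u(A₁),…,u(A_n) ∈ ℝ², the polygon spring energy satisfies E_poly(u,P_n) ≥ c₂ ‖∇u‖²_{L²(P_n)} − c₃ |P_n|. -/
/-!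
Writing the gradient on `T_i` as (edge differences of `u`) times (inverse edge matrix of `T_i`),
submultiplicativity of the Frobenius norm bounds `‖∇u|_{T_i}‖²` by the squared lengths of two sides
of the deformed triangle. The diagonal `u 1 - u i` is a telescoping sum of boundary edges, so
Cauchy–Schwarz bounds these lengths, and hence `‖∇u‖²`, by the sum of the `‖u (j + 1) - u j‖²`.
Since `a² ≤ 2 (a - b)² + 2 b²`, that sum exceeds twice the spring energy by at most a constant of
the polygon, which is absorbed by a multiple of `|Pₙ| > 0`.
-/

section FrobeniusNorm

open scoped Matrix.Norms.Frobenius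

lemma frobSq_eq_norm_sq (M : Matrix (Fin 2) (Fin 2) ℝ) : frobSq M = ‖M‖ ^ 2 := by
  simp only [Matrix.frobenius_norm_def, frobSq, ← Real.sqrt_eq_rpow, Real.rpow_two,
    Real.norm_eq_abs, sq_abs]
  rw [Real.sq_sqrt (by positivity)]

lemma frobSq_nonneg (M : Matrix (Fin 2) (Fin 2) ℝ) : 0 ≤ frobSq M :=
  frobSq_eq_norm_sq M ▸ sq_nonneg ‖M‖

lemma frobSq_mul_le (M N : Matrix (Fin 2) (Fin 2) ℝ) :
    frobSq (M * N) ≤ frobSq M * frobSq N := by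
  simp only [frobSq_eq_norm_sq, ← mul_pow]
  gcongr
  exact Matrix.frobenius_norm_mul M N

end FrobeniusNorm

lemma frobSq_colMat (v w : EuclideanSpace ℝ (Fin 2)) :
    frobSq (colMat v w) = ‖v‖ ^ 2 + ‖w‖ ^ 2 := by
  simp only [frobSq, colMat, EuclideanSpace.real_norm_sq_eq, Matrix.of_apply, Fin.sum_univ_two,
    Matrix.cons_val_zero, Matrix.cons_val_one]
  ring

lemma frobSq_gradMat_le (x₁ x₂ x₃ u₁ u₂ u₃ : EuclideanSpace ℝ (Fin 2)) :
    frobSq (gradMat x₁ x₂ x₃ u₁ u₂ u₃) ≤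
      (‖u₁ - u₂‖ ^ 2 + ‖u₂ - u₃‖ ^ 2) * frobSq (colMat (x₁ - x₂) (x₂ - x₃))⁻¹ :=
  frobSq_colMat (u₁ - u₂) (u₂ - u₃) ▸ frobSq_mul_le _ _

section Area

open MeasureTheory

lemma measure_convexHull_pos {E : Type*} [NormedAddCommGroup E] [NormedSpace ℝ E]
    [FiniteDimensional ℝ E] [MeasurableSpace E] (μ : Measure E) [μ.IsOpenPosMeasure]
    {s : Set E} (hs : affineSpan ℝ s = ⊤) : 0 < μ (convexHull ℝ s) :=
  μ.measure_pos_of_nonempty_interior (interior_convexHull_nonempty_iff_affineSpan_eq_top.2 hs)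

lemma triArea_nonneg (A B C : EuclideanSpace ℝ (Fin 2)) : 0 ≤ triArea A B C :=
  ENNReal.toReal_nonneg

lemma triArea_pos_s2 {A B C : EuclideanSpace ℝ (Fin 2)} (h : AffineIndependent ℝ ![A, B, C]) :
    0 < triArea A B C := by
  have hspan : affineSpan ℝ {A, B, C} = ⊤ := by
    have hrange : Set.range ![A, B, C] = {A, B, C} := by
      simp only [Matrix.range_cons, Matrix.range_empty, Set.union_empty, Set.singleton_union]
    rw [← hrange, h.affineSpan_eq_top_iff_card_eq_finrank_add_one, Fintype.card_fin,
      finrank_euclideanSpace_fin]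
  have hcompact : IsCompact (convexHull ℝ {A, B, C}) := (Set.toFinite _).isCompact_convexHull ℝ
  exact ENNReal.toReal_pos (measure_convexHull_pos volume hspan).ne' hcompact.measure_lt_top.ne

lemma polyArea_pos {n : ℕ} (hn : 3 ≤ n) {A : ℕ → EuclideanSpace ℝ (Fin 2)}
    (hfan : ∀ i ∈ Finset.Icc 2 (n - 1), AffineIndependent ℝ ![A 1, A i, A (i + 1)]) :
    0 < polyArea n A :=
  Finset.sum_pos (fun i hi => triArea_pos_s2 (hfan i hi)) (Finset.nonempty_Icc.2 (by omega))

end Area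

section EdgeEnergy

variable {E : Type*} [SeminormedAddCommGroup E]

/-- The spring energy of the open path `u 1, …, u n` with all rest lengths zero, that is, the sum
of its squared edge lengths. It mediates between `polyGradSq` and `polyEnergy`. -/
noncomputable def edgeEnergy (n : ℕ) (u : ℕ → E) : ℝ :=
  ∑ i ∈ Finset.Icc 1 (n - 1), ‖u (i + 1) - u i‖ ^ 2

lemma edgeEnergy_nonneg (n : ℕ) (u : ℕ → E) : 0 ≤ edgeEnergy n u :=
  Finset.sum_nonneg fun _ _ => sq_nonneg _

lemma sq_norm_sub_le_mul_sum_Ico (u : ℕ → E) {m n : ℕ} (hmn : m ≤ n) :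
    ‖u m - u n‖ ^ 2 ≤ (n - m : ℕ) * ∑ i ∈ Finset.Ico m n, ‖u (i + 1) - u i‖ ^ 2 := by
  have htelescope : ‖u m - u n‖ ≤ ∑ i ∈ Finset.Ico m n, ‖u (i + 1) - u i‖ := by
    simpa only [dist_eq_norm, norm_sub_rev (u _) (u (_ + 1))] using dist_le_Ico_sum_dist u hmn
  calc ‖u m - u n‖ ^ 2 ≤ (∑ i ∈ Finset.Ico m n, ‖u (i + 1) - u i‖) ^ 2 := by gcongr
    _ ≤ (n - m : ℕ) * ∑ i ∈ Finset.Ico m n, ‖u (i + 1) - u i‖ ^ 2 := by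
      simpa only [Nat.card_Ico] using
        sq_sum_le_card_mul_sum_sq (s := Finset.Ico m n) (f := fun i => ‖u (i + 1) - u i‖)

lemma fan_sq_norm_add_le_mul_edgeEnergy (u : ℕ → E) {n i : ℕ} (hi : i ∈ Finset.Icc 1 (n - 1)) :
    ‖u 1 - u i‖ ^ 2 + ‖u i - u (i + 1)‖ ^ 2 ≤ n * edgeEnergy n u := by
  obtain ⟨hi1, hin⟩ := Finset.mem_Icc.1 hi
  have hsub : Finset.Ico 1 (i + 1) ⊆ Finset.Icc 1 (n - 1) := fun j hj => by
    simp only [Finset.mem_Ico, Finset.mem_Icc] at hj ⊢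
    omega
  have hcoef : ((i - 1 : ℕ) : ℝ) ≤ n := by exact_mod_cast (by omega : i - 1 ≤ n)
  have hone : (1 : ℝ) ≤ n := by exact_mod_cast (by omega : 1 ≤ n)
  calc ‖u 1 - u i‖ ^ 2 + ‖u i - u (i + 1)‖ ^ 2
      ≤ (i - 1 : ℕ) * ∑ j ∈ Finset.Ico 1 i, ‖u (j + 1) - u j‖ ^ 2 + 1 * ‖u (i + 1) - u i‖ ^ 2 := by
        rw [one_mul, norm_sub_rev (u i)]
        gcongr
        exact sq_norm_sub_le_mul_sum_Ico u hi1
    _ ≤ n * ∑ j ∈ Finset.Ico 1 i, ‖u (j + 1) - u j‖ ^ 2 + n * ‖u (i + 1) - u i‖ ^ 2 := by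
        gcongr
    _ = n * ∑ j ∈ Finset.Ico 1 (i + 1), ‖u (j + 1) - u j‖ ^ 2 := by
        rw [Finset.sum_Ico_succ_top hi1, mul_add]
    _ ≤ n * edgeEnergy n u := by
        unfold edgeEnergy
        gcongr

end EdgeEnergy

lemma sum_sq_le_two_mul_sum_sub_sq_add {ι : Type*} (s : Finset ι) (a b : ι → ℝ) :
    ∑ i ∈ s, a i ^ 2 ≤ 2 * (∑ i ∈ s, (a i - b i) ^ 2 + ∑ i ∈ s, b i ^ 2) := by
  rw [← Finset.sum_add_distrib, Finset.mul_sum]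
  gcongr with i
  simpa only [sub_add_cancel] using add_sq_le (a := a i - b i) (b := b i)

lemma edgeEnergy_le_two_mul_polyEnergy_add (n : ℕ) (A u : ℕ → EuclideanSpace ℝ (Fin 2)) :
    edgeEnergy n u ≤ 2 * (polyEnergy n A u + edgeEnergy n A) :=
  sum_sq_le_two_mul_sum_sub_sq_add _ _ _

lemma polyEnergy_nonneg (n : ℕ) (A u : ℕ → EuclideanSpace ℝ (Fin 2)) : 0 ≤ polyEnergy n A u :=
  Finset.sum_nonneg fun _ _ => sq_nonneg _

/-- The shape constant of the fan triangulation: the sum of the squared Frobenius norms of the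
inverse edge matrices, weighted by area. It bounds `polyGradSq` in terms of `edgeEnergy`. -/
noncomputable def fanShapeConst (n : ℕ) (A : ℕ → EuclideanSpace ℝ (Fin 2)) : ℝ :=
  ∑ i ∈ Finset.Icc 2 (n - 1),
    frobSq (colMat (A 1 - A i) (A i - A (i + 1)))⁻¹ * triArea (A 1) (A i) (A (i + 1))

lemma fanShapeConst_nonneg (n : ℕ) (A : ℕ → EuclideanSpace ℝ (Fin 2)) : 0 ≤ fanShapeConst n A :=
  Finset.sum_nonneg fun _ _ => mul_nonneg (frobSq_nonneg _) (triArea_nonneg _ _ _)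

lemma polyGradSq_le_mul_edgeEnergy (n : ℕ) (A u : ℕ → EuclideanSpace ℝ (Fin 2)) :
    polyGradSq n A u ≤ n * fanShapeConst n A * edgeEnergy n u := by
  rw [mul_right_comm, fanShapeConst, polyGradSq, Finset.mul_sum]
  refine Finset.sum_le_sum fun i hi => ?_
  have hi' : i ∈ Finset.Icc 1 (n - 1) := Finset.Icc_subset_Icc_left one_le_two hi
  rw [← mul_assoc]
  refine mul_le_mul_of_nonneg_right ?_ (triArea_nonneg _ _ _)
  exact (frobSq_gradMat_le _ _ _ _ _ _).trans <|
    mul_le_mul_of_nonneg_right (fan_sq_norm_add_le_mul_edgeEnergy u hi') (frobSq_nonneg _)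

/-- Lower bound for the spring energy of a nondegenerate convex polygon with vertices
`A 1, …, A n` (`n ≥ 3`) listed in cyclic order (in particular each fan triangle
`A 1, A i, A (i+1)`, `i = 2, …, n−1`, is nondegenerate): there are `c₂, c₃ > 0`
depending only on the vertices such that for all values `u 1, …, u n ∈ ℝ²`,
`E_poly(u, Pₙ) ≥ c₂ ‖∇u‖²_{L²(Pₙ)} − c₃ |Pₙ|`. -/
theorem polygon_energy_lower_bound (n : ℕ) (hn : 3 ≤ n)
    (A : ℕ → EuclideanSpace ℝ (Fin 2))
    (hfan : ∀ i ∈ Finset.Icc 2 (n - 1), AffineIndependent ℝ ![A 1, A i, A (i + 1)]) :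
    ∃ c₂ c₃ : ℝ, 0 < c₂ ∧ 0 < c₃ ∧
      ∀ u : ℕ → EuclideanSpace ℝ (Fin 2),
        polyEnergy n A u ≥ c₂ * polyGradSq n A u - c₃ * polyArea n A := by
  have hP : 0 < polyArea n A := polyArea_pos hn hfan
  have hL : 0 ≤ edgeEnergy n A := edgeEnergy_nonneg n A
  set C : ℝ := n * fanShapeConst n A
  have hC : 0 ≤ C := mul_nonneg n.cast_nonneg (fanShapeConst_nonneg n A)
  refine ⟨(2 * C + 1)⁻¹, (edgeEnergy n A + 1) / polyArea n A, by positivity, by positivity,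
    fun u => ?_⟩
  have hE : 0 ≤ polyEnergy n A u := polyEnergy_nonneg n A u
  rw [div_mul_cancel₀ _ hP.ne', ge_iff_le, sub_le_iff_le_add, inv_mul_le_iff₀ (by positivity)]
  calc polyGradSq n A u ≤ C * edgeEnergy n u := polyGradSq_le_mul_edgeEnergy n A u
    _ ≤ C * (2 * (polyEnergy n A u + edgeEnergy n A)) := by
        gcongr
        exact edgeEnergy_le_two_mul_polyEnergy_add n A u
    _ = 2 * C * (polyEnergy n A u + edgeEnergy n A) := by ring
    _ ≤ (2 * C + 1) * (polyEnergy n A u + (edgeEnergy n A + 1)) := by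
        gcongr <;> linarith
end

section
/- Let T ⊂ ℝ² be the closed triangle with affinely independent vertices x₁, x₂, x₃, let u : ℝ² → ℝ² be an affine map, let φ : ℝ² → ℝ be a bounded function defined on T, and let h : ℝ² → ℝ² be the unique affine map with h(x_i) = φ(x_i)·u(x_i) for i = 1,2,3. Then there exists a constant C′ > 0, depending only on x₁, x₂, x₃, such that ∫_T ‖h(x)‖² dx ≤ C′ · (sup_{x∈T} |φ(x)|)² · ∫_T ‖u(x)‖² dx. -/
open MeasureTheory

/-- The affine map `x ↦ M x + b` on `ℝ²`. -/
noncomputable def affApply (M : Matrix (Fin 2) (Fin 2) ℝ) (b x : EuclideanSpace ℝ (Fin 2)) :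
    EuclideanSpace ℝ (Fin 2) :=
  (WithLp.equiv 2 (Fin 2 → ℝ)).symm
    (M.mulVec ((WithLp.equiv 2 (Fin 2 → ℝ)) x) + (WithLp.equiv 2 (Fin 2 → ℝ)) b)

/-!
Write `T` for the triangle, or more generally for the convex hull of a set `s` in dimension `n`, and
let `a ∈ T`. The dilation `m z = (a + z) / 2` maps `T` into itself and scales the measure by `2⁻ⁿ`,
so `f ↦ f ∘ m` has norm at most `2 ^ (n / p)` on `Lᵖ(T)`. For affine `u` we have
`u a = 2 u (m z) - u z`; hence the constant `u a` has `Lᵖ(T)` norm at most `1 + 2 · 2 ^ (n / p)`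
times that of `u`. At the points of `s` this controls `h`, and since the sublevel sets of `‖h‖` are
convex, its supremum over `T` equals its supremum over `s`.
-/

open Module (finrank)
open scoped ENNReal

section Convexity

lemma mapsTo_homothety_of_starConvex {𝕜 V : Type*} [CommRing 𝕜] [PartialOrder 𝕜]
    [IsOrderedRing 𝕜] [AddCommGroup V] [Module 𝕜 V] {T : Set V} {a : V} {r : 𝕜}
    (hT : StarConvex 𝕜 a T) (hr₀ : 0 ≤ r) (hr₁ : r ≤ 1) :
    Set.MapsTo (AffineMap.homothety a r) T T := fun z hz ↦ by
  have homothety_eq : AffineMap.homothety a r z = (1 - r) • a + r • z := by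
    rw [AffineMap.homothety_apply, vsub_eq_sub, vadd_eq_add]
    module
  exact homothety_eq ▸ hT hz (sub_nonneg.2 hr₁) hr₀ (sub_add_cancel 1 r)

lemma enorm_apply_le_iSup_of_mem_convexHull {V G : Type*} [AddCommGroup V] [Module ℝ V]
    [NormedAddCommGroup G] [NormedSpace ℝ G] {s : Set V} (h : V →ᵃ[ℝ] G) {x : V}
    (hx : x ∈ convexHull ℝ s) : ‖h x‖ₑ ≤ ⨆ y : s, ‖h y‖ₑ := by
  set B := ⨆ y : s, ‖h y‖ₑ
  have sublevel_convex : Convex ℝ (h ⁻¹' Metric.closedEBall 0 B) :=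
    (convex_closedEBall 0 B).affine_preimage h
  have subset_sublevel : s ⊆ h ⁻¹' Metric.closedEBall 0 B := fun y hy ↦ by
    simpa using le_iSup (fun y : s ↦ ‖h y‖ₑ) ⟨y, hy⟩
  simpa using convexHull_min subset_sublevel sublevel_convex hx

end Convexity

section Lp

variable {X F : Type*} [MeasurableSpace X] {ν : Measure X} [NormedAddCommGroup F] {f : X → F}

lemma lpNorm_two_sq_eq_integral (hf : AEStronglyMeasurable f ν) :
    lpNorm f 2 ν ^ 2 = ∫ x, ‖f x‖ ^ 2 ∂ν := by
  have integral_nonneg : 0 ≤ ∫ x, ‖f x‖ ^ 2 ∂ν := by positivity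
  rw [lpNorm_eq_integral_norm_rpow_toReal two_ne_zero ENNReal.ofNat_ne_top hf,
    ENNReal.toReal_ofNat, ← one_div, ← Real.sqrt_eq_rpow]
  simpa only [Real.rpow_two] using Real.sq_sqrt integral_nonneg

lemma memLp_restrict_of_continuous_of_isBounded [PseudoMetricSpace X] [ProperSpace X]
    [OpensMeasurableSpace X] [IsFiniteMeasureOnCompacts ν] {p : ℝ≥0∞} {T : Set X}
    (hf : Continuous f) (hT : Bornology.IsBounded T) : MemLp f p (ν.restrict T) := by
  have closure_compact : IsCompact (closure T) := hT.isCompact_closure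
  have : IsFiniteMeasure (ν.restrict (closure T)) :=
    isFiniteMeasure_restrict.2 closure_compact.measure_ne_top
  obtain ⟨C, hC⟩ := closure_compact.exists_bound_of_continuousOn hf.continuousOn
  exact (MemLp.of_bound hf.aestronglyMeasurable C
    (ae_restrict_of_forall_mem isClosed_closure.measurableSet hC)).mono_measure
      (Measure.restrict_mono subset_closure le_rfl)

end Lp

section Haar

variable {E F G ε : Type*} [NormedAddCommGroup E] [NormedSpace ℝ E] [MeasurableSpace E]
  [BorelSpace E] [NormedAddCommGroup F] [NormedSpace ℝ F] [NormedAddCommGroup G] [NormedSpace ℝ G]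
  [TopologicalSpace ε] [ContinuousENorm ε] {p : ℝ≥0∞} {s T : Set E} {a : E} {r : ℝ}

lemma measurableEmbedding_homothety (a : E) (hr : r ≠ 0) :
    MeasurableEmbedding (AffineMap.homothety a r) :=
  ((measurableEmbedding_addRight a).comp (measurableEmbedding_const_smul₀ hr)).comp
    (measurableEmbedding_subRight a)

variable [FiniteDimensional ℝ E] {μ : Measure E} [μ.IsAddHaarMeasure]

lemma map_homothety_addHaar (a : E) (hr : r ≠ 0) :
    μ.map (AffineMap.homothety a r) = ENNReal.ofReal |(r ^ finrank ℝ E)⁻¹| • μ := by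
  have homothety_eq_comp : ⇑(AffineMap.homothety a r) = (· + a) ∘ (r • ·) ∘ (· - a) := rfl
  rw [homothety_eq_comp, ← Measure.map_map (by fun_prop) (by fun_prop),
    ← Measure.map_map (by fun_prop) (by fun_prop), map_sub_right_eq_self,
    Measure.map_addHaar_smul μ hr, Measure.map_smul, map_add_right_eq_self]

lemma map_homothety_restrict_le (hT : StarConvex ℝ a T) (hr₀ : 0 < r) (hr₁ : r ≤ 1) :
    (μ.restrict T).map (AffineMap.homothety a r) ≤
      ENNReal.ofReal r⁻¹ ^ finrank ℝ E • μ.restrict T := by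
  set m := AffineMap.homothety a r
  have hm : MeasurableEmbedding m := measurableEmbedding_homothety a hr₀.ne'
  calc (μ.restrict T).map m
    _ ≤ (μ.restrict (m ⁻¹' T)).map m :=
      Measure.map_mono (Measure.restrict_mono
        (mapsTo_homothety_of_starConvex hT hr₀.le hr₁) le_rfl) hm.measurable
    _ = (μ.map m).restrict T := (hm.restrict_map μ T).symm
    _ = ENNReal.ofReal r⁻¹ ^ finrank ℝ E • μ.restrict T := by
      rw [map_homothety_addHaar a hr₀.ne', Measure.restrict_smul, ← inv_pow,
        abs_of_nonneg (by positivity), ENNReal.ofReal_pow (by positivity)]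

lemma eLpNorm_comp_homothety_le (hT : StarConvex ℝ a T) (hr₀ : 0 < r) (hr₁ : r ≤ 1) (f : E → ε) :
    eLpNorm (f ∘ AffineMap.homothety a r) p (μ.restrict T) ≤
      ENNReal.ofReal r⁻¹ ^ (finrank ℝ E / p.toReal) * eLpNorm f p (μ.restrict T) := by
  have factor_ne_zero : ENNReal.ofReal r⁻¹ ^ finrank ℝ E ≠ 0 :=
    pow_ne_zero _ (ENNReal.ofReal_pos.2 (inv_pos.2 hr₀)).ne'
  calc eLpNorm (f ∘ AffineMap.homothety a r) p (μ.restrict T)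
    _ = eLpNorm f p ((μ.restrict T).map (AffineMap.homothety a r)) :=
      (measurableEmbedding_homothety a hr₀.ne').eLpNorm_map_measure.symm
    _ ≤ eLpNorm f p (ENNReal.ofReal r⁻¹ ^ finrank ℝ E • μ.restrict T) :=
      eLpNorm_mono_measure f (map_homothety_restrict_le hT hr₀ hr₁)
    _ = ENNReal.ofReal r⁻¹ ^ (finrank ℝ E / p.toReal) * eLpNorm f p (μ.restrict T) := by
      rw [eLpNorm_smul_measure_of_ne_zero factor_ne_zero, ← ENNReal.rpow_natCast,
        ← ENNReal.rpow_mul, smul_eq_mul, one_div, ENNReal.toReal_inv, div_eq_mul_inv]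

lemma eLpNorm_const_apply_le_of_starConvex (hT : StarConvex ℝ a T) (hp : 1 ≤ p) (u : E →ᵃ[ℝ] F) :
    eLpNorm (fun _ ↦ u a) p (μ.restrict T) ≤
      (1 + 2 * 2 ^ (finrank ℝ E / p.toReal)) * eLpNorm u p (μ.restrict T) := by
  set m := AffineMap.homothety a (2⁻¹ : ℝ)
  have hu : Continuous u := u.continuous_of_finiteDimensional
  have hm : Continuous m := m.continuous_of_finiteDimensional
  have const_eq : (fun _ ↦ u a) = (2 : ℝ) • (u ∘ m) - (u : E → F) := by
    ext z
    have apply_m : u (m z) = midpoint ℝ (u a) (u z) := by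
      rw [← u.map_midpoint, ← homothety_inv_two]
    simp [apply_m, midpoint_eq_smul_add]
  calc eLpNorm (fun _ ↦ u a) p (μ.restrict T)
    _ ≤ 2 * eLpNorm (u ∘ m) p (μ.restrict T) + eLpNorm u p (μ.restrict T) := by
      rw [const_eq]
      refine (eLpNorm_sub_le ((hu.comp hm).const_smul (2 : ℝ)).aestronglyMeasurable
        hu.aestronglyMeasurable hp).trans_eq ?_
      rw [eLpNorm_const_smul, Real.enorm_of_nonneg zero_le_two, ENNReal.ofReal_ofNat]
    _ ≤ 2 * (2 ^ (finrank ℝ E / p.toReal) * eLpNorm u p (μ.restrict T)) +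
          eLpNorm u p (μ.restrict T) := by
      gcongr
      simpa using eLpNorm_comp_homothety_le (r := 2⁻¹) hT (by norm_num) (by norm_num) u
    _ = (1 + 2 * 2 ^ (finrank ℝ E / p.toReal)) * eLpNorm u p (μ.restrict T) := by ring

theorem eLpNorm_convexHull_le_of_enorm_le (hp : 1 ≤ p) (u : E →ᵃ[ℝ] F) (h : E →ᵃ[ℝ] G)
    {C : ℝ≥0∞} (hC : ∀ x ∈ s, ‖h x‖ₑ ≤ C * ‖u x‖ₑ) :
    eLpNorm h p (μ.restrict (convexHull ℝ s)) ≤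
      C * ((1 + 2 * 2 ^ (finrank ℝ E / p.toReal)) *
        eLpNorm u p (μ.restrict (convexHull ℝ s))) := by
  set ν := μ.restrict (convexHull ℝ s)
  obtain hν | hν := eq_or_ne ν 0
  · simp [hν]
  have h_le_iSup : ∀ᵐ x ∂ν, ‖h x‖ₑ ≤ ⨆ y : s, ‖h y‖ₑ :=
    (ae_restrict_iff (measurableSet_le h.continuous_of_finiteDimensional.enorm.measurable
      measurable_const)).2 (.of_forall fun _ ↦ enorm_apply_le_iSup_of_mem_convexHull h)
  calc eLpNorm h p ν
    _ ≤ (⨆ y : s, ‖h y‖ₑ) * ν Set.univ ^ p.toReal⁻¹ := eLpNorm_le_of_ae_enorm_bound h_le_iSup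
    _ = ⨆ y : s, ‖h y‖ₑ * ν Set.univ ^ p.toReal⁻¹ := ENNReal.iSup_mul ..
    _ ≤ _ := iSup_le fun ⟨y, hy⟩ ↦ ?_
  calc ‖h y‖ₑ * ν Set.univ ^ p.toReal⁻¹
    _ ≤ C * ‖u y‖ₑ * ν Set.univ ^ p.toReal⁻¹ := by gcongr; exact hC y hy
    _ = C * eLpNorm (fun _ ↦ u y) p ν := by
      rw [eLpNorm_const _ (by positivity) hν, one_div, mul_assoc]
    _ ≤ _ := by
      gcongr
      exact eLpNorm_const_apply_le_of_starConvex
        ((convex_convexHull ℝ s).starConvex (subset_convexHull ℝ s hy)) hp u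

theorem lpNorm_convexHull_le_of_norm_le (hp : 1 ≤ p) (hs : Bornology.IsBounded s)
    (u : E →ᵃ[ℝ] F) (h : E →ᵃ[ℝ] G) {C : ℝ} (hC₀ : 0 ≤ C) (hC : ∀ x ∈ s, ‖h x‖ ≤ C * ‖u x‖) :
    lpNorm h p (μ.restrict (convexHull ℝ s)) ≤
      C * ((1 + 2 * 2 ^ (finrank ℝ E / p.toReal)) *
        lpNorm u p (μ.restrict (convexHull ℝ s))) := by
  have memLp_u : MemLp u p (μ.restrict (convexHull ℝ s)) :=
    memLp_restrict_of_continuous_of_isBounded u.continuous_of_finiteDimensional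
      (isBounded_convexHull.2 hs)
  have memLp_h : MemLp h p (μ.restrict (convexHull ℝ s)) :=
    memLp_restrict_of_continuous_of_isBounded h.continuous_of_finiteDimensional
      (isBounded_convexHull.2 hs)
  have enorm_h_le : ∀ x ∈ s, ‖h x‖ₑ ≤ ENNReal.ofReal C * ‖u x‖ₑ := fun x hx ↦ by
    rw [← ofReal_norm, ← ofReal_norm, ← ENNReal.ofReal_mul hC₀]
    exact ENNReal.ofReal_le_ofReal (hC x hx)
  have factor_eq : (1 + 2 * 2 ^ (finrank ℝ E / p.toReal) : ℝ≥0∞) =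
      ENNReal.ofReal (1 + 2 * 2 ^ (finrank ℝ E / p.toReal)) := by
    rw [ENNReal.ofReal_add zero_le_one (by positivity), ENNReal.ofReal_mul zero_le_two,
      ← ENNReal.ofReal_rpow_of_pos zero_lt_two, ENNReal.ofReal_one, ENNReal.ofReal_ofNat]
  have eLpNorm_le := eLpNorm_convexHull_le_of_enorm_le (μ := μ) hp u h enorm_h_le
  rw [← ofReal_lpNorm memLp_h, ← ofReal_lpNorm memLp_u, factor_eq,
    ← ENNReal.ofReal_mul (by positivity), ← ENNReal.ofReal_mul hC₀] at eLpNorm_le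
  exact (ENNReal.ofReal_le_ofReal_iff
    (mul_nonneg hC₀ (mul_nonneg (by positivity) lpNorm_nonneg))).1 eLpNorm_le

theorem L2_bound_interpolated_product_general (hs : Bornology.IsBounded s) (u h : E →ᵃ[ℝ] F)
    (φ : E → ℝ) {C : ℝ} (hφ : ∀ x ∈ s, |φ x| ≤ C) (hh : ∀ x ∈ s, h x = φ x • u x) :
    ∫ x in convexHull ℝ s, ‖h x‖ ^ 2 ∂μ ≤
      (1 + 2 * 2 ^ (finrank ℝ E / 2 : ℝ)) ^ 2 * C ^ 2 *
        ∫ x in convexHull ℝ s, ‖u x‖ ^ 2 ∂μ := by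
  set ν := μ.restrict (convexHull ℝ s)
  have norm_h_le : ∀ x ∈ s, ‖h x‖ ≤ |C| * ‖u x‖ := fun x hx ↦ by
    rw [hh x hx, norm_smul, Real.norm_eq_abs]
    exact mul_le_mul_of_nonneg_right ((hφ x hx).trans (le_abs_self C)) (norm_nonneg _)
  have aestronglyMeasurable (f : E →ᵃ[ℝ] F) : AEStronglyMeasurable f ν :=
    f.continuous_of_finiteDimensional.aestronglyMeasurable
  calc ∫ x, ‖h x‖ ^ 2 ∂ν
    _ = lpNorm h 2 ν ^ 2 := (lpNorm_two_sq_eq_integral (aestronglyMeasurable h)).symm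
    _ ≤ (|C| * ((1 + 2 * 2 ^ (finrank ℝ E / 2 : ℝ)) * lpNorm u 2 ν)) ^ 2 :=
      pow_le_pow_left₀ lpNorm_nonneg
        (lpNorm_convexHull_le_of_norm_le one_le_two hs u h (abs_nonneg C) norm_h_le) 2
    _ = (1 + 2 * 2 ^ (finrank ℝ E / 2 : ℝ)) ^ 2 * C ^ 2 * ∫ x, ‖u x‖ ^ 2 ∂ν := by
      rw [← lpNorm_two_sq_eq_integral (aestronglyMeasurable u), ← sq_abs C]
      ring

end Haar

/-- The map `x ↦ M x + b` bundled as an affine map, so that the results on affine maps apply to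
`affApply M b`. -/
noncomputable def affApplyAffineMap (M : Matrix (Fin 2) (Fin 2) ℝ) (b : EuclideanSpace ℝ (Fin 2)) :
    EuclideanSpace ℝ (Fin 2) →ᵃ[ℝ] EuclideanSpace ℝ (Fin 2) :=
  (Matrix.toEuclideanLin M).toAffineMap + AffineMap.const ℝ _ b

/-- `L²` bound for the affine interpolation of `φ·u`: if `T` is the closed triangle with
affinely independent vertices `x₁, x₂, x₃`, `u : ℝ² → ℝ²` is affine, `φ : ℝ² → ℝ` is
bounded on `T`, and `h` is the affine map with `h(xᵢ) = φ(xᵢ)·u(xᵢ)`, then there is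
`C′ > 0` depending only on the vertices with
`∫_T ‖h‖² ≤ C′ (sup_T |φ|)² ∫_T ‖u‖²`. -/
theorem L2_bound_interpolated_product (x₁ x₂ x₃ : EuclideanSpace ℝ (Fin 2))
    (hInd : AffineIndependent ℝ ![x₁, x₂, x₃]) :
    ∃ C' : ℝ, 0 < C' ∧
      ∀ (Du : Matrix (Fin 2) (Fin 2) ℝ) (bu : EuclideanSpace ℝ (Fin 2))
        (φ : EuclideanSpace ℝ (Fin 2) → ℝ),
        BddAbove ((fun x => |φ x|) '' convexHull ℝ {x₁, x₂, x₃}) →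
        ∀ (Dh : Matrix (Fin 2) (Fin 2) ℝ) (bh : EuclideanSpace ℝ (Fin 2)),
          affApply Dh bh x₁ = φ x₁ • affApply Du bu x₁ →
          affApply Dh bh x₂ = φ x₂ • affApply Du bu x₂ →
          affApply Dh bh x₃ = φ x₃ • affApply Du bu x₃ →
          (∫ x in convexHull ℝ {x₁, x₂, x₃}, ‖affApply Dh bh x‖ ^ 2) ≤
            C' * (sSup ((fun x => |φ x|) '' convexHull ℝ {x₁, x₂, x₃})) ^ 2 *
              ∫ x in convexHull ℝ {x₁, x₂, x₃}, ‖affApply Du bu x‖ ^ 2 := by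
  refine ⟨(1 + 2 * 2 ^ (finrank ℝ (EuclideanSpace ℝ (Fin 2)) / 2 : ℝ)) ^ 2, by positivity,
    fun Du bu φ hφ Dh bh h₁ h₂ h₃ ↦ ?_⟩
  exact L2_bound_interpolated_product_general (Set.toFinite _).isBounded
    (affApplyAffineMap Du bu) (affApplyAffineMap Dh bh) φ
    (fun x hx ↦ le_csSup hφ (Set.mem_image_of_mem _ (subset_convexHull ℝ _ hx)))
    (by rintro _ (rfl | rfl | rfl) <;> assumption)
end
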